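/- Let S be an s-dimensional ℂ-subspace of functions X × U → ℂ consisting of input-state separable combinations, invariant under the augmented Koopman operator K^aug, with a basis Φ : X × U → ℂ^s decomposed as Φ(x,u) = G(u) H(x), where G : U → ℂ^{s×l} and H : X → ℂ^l, and suppose G(u) has full column rank for every u ∈ U (so that the Gram matrix G(u)^H G(u) ∈ ℂ^{l×l} is invertible for every u). Let A ∈ ℂ^{s×s} be a matrix such that Φ(T^aug(x,u)) = A Φ(x,u) for all (x,u). Then, defining the matrix-valued map 𝒜 : U → ℂ^{l×l} by 𝒜(u) = (G(u)^H G(u))^{-1} G(u)^H A G(u), one has H(T(x,u)) = 𝒜(u) H(x) for all (x,u) ∈ X × U. -/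

import Mathlib

open Matrix

/-! A matrix `G` of full column rank has the left inverse `(GᴴG)⁻¹Gᴴ`. Reading the relation
`Φ(T(x,u), u) = A Φ(x,u)` through `Φ(x,u) = G(u)H(x)` gives `G(u)H(T(x,u)) = A G(u)H(x)`, and the
left inverse of `G(u)` cancels the factor on the left. -/

section

variable {m n R : Type*} [Fintype m] [Fintype n]

theorem isUnit_of_rank_eq_card [DecidableEq n] [Field R] {M : Matrix n n R}
    (hM : M.rank = Fintype.card n) : IsUnit M := by
  rw [← linearIndependent_cols_iff_isUnit, linearIndependent_iff_card_eq_finrank_span]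
  exact hM.symm.trans M.rank_eq_finrank_span_cols

theorem eq_mulVec_of_mul_eq_one_of_mulVec_eq [DecidableEq n] [Semiring R]
    {B : Matrix n m R} {G : Matrix m n R} {A : Matrix m m R} {v w : n → R}
    (hBG : B * G = 1) (h : G *ᵥ w = A *ᵥ (G *ᵥ v)) : w = (B * A * G) *ᵥ v :=
  calc
    w = B *ᵥ (G *ᵥ w) := by rw [mulVec_mulVec, hBG, one_mulVec]
    _ = B *ᵥ (A *ᵥ (G *ᵥ v)) := by rw [h]
    _ = (B * A * G) *ᵥ v := by simp only [mulVec_mulVec, Matrix.mul_assoc]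

variable [DecidableEq n] [Field R] [PartialOrder R] [StarRing R] [StarOrderedRing R]

theorem inv_conjTranspose_mul_self_mul_conjTranspose_mul_self {G : Matrix m n R}
    (hG : G.rank = Fintype.card n) : (Gᴴ * G)⁻¹ * Gᴴ * G = 1 := by
  have gram_isUnit : IsUnit (Gᴴ * G) :=
    isUnit_of_rank_eq_card (G.rank_conjTranspose_mul_self.trans hG)
  rw [Matrix.mul_assoc, nonsing_inv_mul _ ((isUnit_iff_isUnit_det _).mp gram_isUnit)]

theorem separable_form_from_invariant_augmented_general {X U : Type*} (T : X × U → X)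
    (Φ : X × U → m → R) (G : U → Matrix m n R) (H : X → n → R)
    (hdec : ∀ x u, Φ (x, u) = G u *ᵥ H x)
    (hrank : ∀ u, (G u).rank = Fintype.card n)
    (A : Matrix m m R) (hA : ∀ x u, Φ (T (x, u), u) = A *ᵥ Φ (x, u)) (x : X) (u : U) :
    H (T (x, u)) = (((G u)ᴴ * G u)⁻¹ * (G u)ᴴ * A * G u) *ᵥ H x := by
  have intertwining : G u *ᵥ H (T (x, u)) = A *ᵥ (G u *ᵥ H x) := by
    rw [← hdec, ← hdec, hA]
  exact eq_mulVec_of_mul_eq_one_of_mulVec_eq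
    (inv_conjTranspose_mul_self_mul_conjTranspose_mul_self (hrank u)) intertwining

end

/-- With `S`, basis `Φ = G(u)H(x)` as in Statement 9, `G(u)` of full
column rank for every `u` (so the Gram matrix `G(u)ᴴG(u)` is invertible), and
`A ∈ ℂ^{s×s}` with `Φ(T^aug(x,u)) = A Φ(x,u)`, the matrix-valued map
`𝒜(u) = (G(u)ᴴG(u))⁻¹ G(u)ᴴ A G(u)` satisfies `H(T(x,u)) = 𝒜(u) H(x)` for all `(x,u)`. -/
theorem separable_form_from_invariant_augmented
    {X U : Type*} [Nonempty X] [Nonempty U] (T : X × U → X)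
    (S : Submodule ℂ (X × U → ℂ)) (s l : ℕ)
    (hSep : ∀ f ∈ S, f ∈ Submodule.span ℂ
      {f : X × U → ℂ | ∃ (g : U → ℂ) (h : X → ℂ), ∀ (x : X) (u : U), f (x, u) = g u * h x})
    (hInv : ∀ g ∈ S, (fun p : X × U => g (T p, p.2)) ∈ S)
    (Φ : Fin s → X × U → ℂ)
    (hli : LinearIndependent ℂ Φ)
    (hspan : Submodule.span ℂ (Set.range Φ) = S)
    (G : U → Matrix (Fin s) (Fin l) ℂ) (H : Fin l → X → ℂ)
    (hdec : ∀ (x : X) (u : U) (i : Fin s), Φ i (x, u) = ∑ j, G u i j * H j x)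
    (hrank : ∀ u : U, (G u).rank = l)
    (A : Matrix (Fin s) (Fin s) ℂ)
    (hA : ∀ (x : X) (u : U) (i : Fin s),
      Φ i (T (x, u), u) = ∑ j, A i j * Φ j (x, u)) :
    ∀ (x : X) (u : U) (j : Fin l),
      H j (T (x, u)) =
        ∑ k, (((G u)ᴴ * G u)⁻¹ * (G u)ᴴ * A * G u) j k * H k x := by
  open scoped ComplexOrder in
  exact fun x u ↦ congrFun <| separable_form_from_invariant_augmented_general T
    (fun p i ↦ Φ i p) G (fun x j ↦ H j x) (fun x u ↦ funext (hdec x u))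
    (by simpa only [Fintype.card_fin] using hrank) A (fun x u ↦ funext (hA x u)) x u
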